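/- Let b : [0,∞) → ℝ be continuously differentiable with b(t) ≥ 0, b(t) ≤ C₁(1+t)^{−1} and |b'(t)| ≤ C₂(1+t)^{−2} for all t ≥ 0, and assume liminf_{t→∞} t·b(t) > 1/2. Set λ(t) = exp(∫₀^t b(τ)dτ) and μ̄ = limsup_{t→∞} t·b(t). Let N > C₁ and let γ ≥ 0 satisfy γ > μ̄ − 1. Then there is a constant C > 0 (depending only on b, N, γ) such that for every Λ > 0, every twice continuously differentiable u : [0,∞) → ℂ with u''(t) + 2b(t)u'(t) + Λ²u(t) = 0, and every t ≥ 0: √(Λ²|u(t)|² + |u'(t)|²) ≤ (C/λ(t))·( min(Λ,N)^{−γ−1}·Λ·|u(0)| + min(Λ,N)^{−γ}·|u'(0)| ). -/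

import Mathlib

open MeasureTheory Filter

/-- The auxiliary function `λ(t) = exp(∫₀^t b)`. -/
noncomputable def lam (b : ℝ → ℝ) (t : ℝ) : ℝ := Real.exp (∫ τ in (0:ℝ)..t, b τ)

/-!
Work with `λ(t)` times the energy norm and split the half-line according to the size of `Λ (1 + t)`.

* For `Λ (1 + t) ≥ 1`, the Liouville transform `w = λ u` removes the damping:
  `w'' = (b² + b' - Λ²) w`, where `b² + b' = O((1 + t)⁻²)`. Gronwall's inequality for
  `Λ² |w|² + |w'|²` loses only the factor `exp (Λ⁻¹ ∫ O((1 + t)⁻²) dt) = O(1)`.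
* For `Λ (1 + t) ≤ 1`, integrate `(λ² u')' = -Λ² λ² u` twice. Since `t b(t) ≥ μ > 1/2` eventually,
  `λ⁻²` is integrable, so `u` stays bounded by its data, and the loss in the estimate is
  `λ Λ = O((1 + t)^(γ + 1) Λ) = O(Λ^(-γ))`.

The two bounds are concatenated at the time `s` with `Λ (1 + s) = 1`, or at `s = 0` if `Λ ≥ 1`.
-/

section HalfLine

variable {a : ℝ}

lemma exists_pos_forall_le_of_eventually_le {f : ℝ → ℝ} {B : ℝ}
    (hf : ContinuousOn f (Set.Ici a)) (hB : ∀ᶠ t in atTop, f t ≤ B) :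
    ∃ C > 0, ∀ t ≥ a, f t ≤ C := by
  obtain ⟨T, hT⟩ := eventually_atTop.1 hB
  obtain ⟨A, hA⟩ := (isCompact_Icc (a := a) (b := T)).bddAbove_image
    (hf.mono Set.Icc_subset_Ici_self)
  refine ⟨max (max A B) 1, by positivity, fun t ht => ?_⟩
  rcases le_total t T with htT | htT
  · exact (hA ⟨t, ⟨ht, htT⟩, rfl⟩).trans (by simp)
  · exact (hT t htT).trans (by simp)

lemma hasDerivWithinAt_Ici_integral {f : ℝ → ℝ} {t : ℝ} (hf : ContinuousOn f (Set.Ici a))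
    (ht : a ≤ t) :
    HasDerivWithinAt (fun x => ∫ τ in a..x, f τ) (f t) (Set.Ici a) t := by
  have hmem : t ∈ Set.Icc a (t + 1) := ⟨ht, by linarith⟩
  have hfIcc : ContinuousOn f (Set.Icc a (t + 1)) := hf.mono Set.Icc_subset_Ici_self
  have hint : IntervalIntegrable f volume a t :=
    (hf.mono Set.Icc_subset_Ici_self).intervalIntegrable_of_Icc ht
  have : Fact (t ∈ Set.Icc a (t + 1)) := ⟨hmem⟩
  refine (intervalIntegral.integral_hasDerivWithinAt_right hint (s := Set.Icc a (t + 1))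
    (hfIcc.stronglyMeasurableAtFilter_nhdsWithin measurableSet_Icc t)
    (hfIcc t hmem)).mono_of_mem_nhdsWithin ?_
  filter_upwards [self_mem_nhdsWithin, mem_nhdsWithin_of_mem_nhds (Iic_mem_nhds (lt_add_one t))]
    with x hax hxt using ⟨hax, hxt⟩

lemma le_exp_sub_mul_of_deriv_le_mul {f f' k K : ℝ → ℝ}
    (hf : ∀ t ≥ a, HasDerivWithinAt f (f' t) (Set.Ici a) t)
    (hK : ∀ t ≥ a, HasDerivWithinAt K (k t) (Set.Ici a) t)
    (hle : ∀ t ≥ a, f' t ≤ k t * f t) {t : ℝ} (ht : a ≤ t) :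
    f t ≤ Real.exp (K t - K a) * f a := by
  have hderiv (x : ℝ) (hx : a ≤ x) : HasDerivWithinAt (fun x => f x * Real.exp (-K x))
      (Real.exp (-K x) * (f' x - k x * f x)) (Set.Ici a) x :=
    ((hf x hx).mul (hK x hx).neg.exp).congr_deriv (by simp only [Pi.neg_apply]; ring)
  have hanti : AntitoneOn (fun x => f x * Real.exp (-K x)) (Set.Ici a) := by
    refine antitoneOn_of_hasDerivWithinAt_nonpos (convex_Ici a)
      (fun x hx => (hderiv x hx).continuousWithinAt)
      (fun x hx => (hderiv x (interior_subset hx)).mono interior_subset) fun x hx => ?_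
    exact mul_nonpos_of_nonneg_of_nonpos (Real.exp_pos _).le
      (sub_nonpos.2 (hle x (interior_subset hx)))
  calc f t = Real.exp (K t) * (f t * Real.exp (-K t)) := by
        rw [mul_left_comm, ← Real.exp_add, add_neg_cancel, Real.exp_zero, mul_one]
    _ ≤ Real.exp (K t) * (f a * Real.exp (-K a)) :=
        mul_le_mul_of_nonneg_left (hanti Set.self_mem_Ici ht ht) (Real.exp_pos _).le
    _ = Real.exp (K t - K a) * f a := by rw [sub_eq_add_neg, Real.exp_add]; ring

lemma hasDerivWithinAt_one_add_rpow {p t : ℝ} (s : Set ℝ) (ht : 0 ≤ t) :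
    HasDerivWithinAt (fun x : ℝ => (1 + x) ^ p) (p * (1 + t) ^ (p - 1)) s t := by
  simpa using (((hasDerivAt_id t).const_add 1).rpow_const (p := p)
    (Or.inl (by simp only [id]; positivity))).hasDerivWithinAt

end HalfLine

section Lam

variable {b : ℝ → ℝ}

lemma lam_pos (b : ℝ → ℝ) (t : ℝ) : 0 < lam b t := Real.exp_pos _

lemma lam_zero (b : ℝ → ℝ) : lam b 0 = 1 := by simp [lam]

lemma lam_neg (b : ℝ → ℝ) (t : ℝ) : lam (-b) t = (lam b t)⁻¹ := by
  simp [lam, ← Real.exp_neg]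

lemma hasDerivWithinAt_lam (hb : ContinuousOn b (Set.Ici 0)) {t : ℝ} (ht : 0 ≤ t) :
    HasDerivWithinAt (lam b) (b t * lam b t) (Set.Ici 0) t :=
  (hasDerivWithinAt_Ici_integral hb ht).exp.congr_deriv (mul_comm _ _)

lemma continuousOn_lam (hb : ContinuousOn b (Set.Ici 0)) : ContinuousOn (lam b) (Set.Ici 0) :=
  fun _ ht => (hasDerivWithinAt_lam hb ht).continuousWithinAt

lemma continuousOn_inv_lam_sq (hb : ContinuousOn b (Set.Ici 0)) :
    ContinuousOn (fun t => (lam b t ^ 2)⁻¹) (Set.Ici 0) :=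
  ((continuousOn_lam hb).pow 2).inv₀ fun t _ => (pow_pos (lam_pos b t) 2).ne'

lemma monotoneOn_lam (hb : ContinuousOn b (Set.Ici 0)) (hb0 : ∀ t ≥ 0, 0 ≤ b t) :
    MonotoneOn (lam b) (Set.Ici 0) :=
  monotoneOn_of_hasDerivWithinAt_nonneg (convex_Ici 0) (continuousOn_lam hb)
    (fun _ ht => (hasDerivWithinAt_lam hb (interior_subset ht)).mono interior_subset)
    fun t ht => mul_nonneg (hb0 t (interior_subset ht)) (lam_pos b t).le

lemma exists_one_add_rpow_le_mul_lam {p : ℝ} (hb : ContinuousOn b (Set.Ici 0))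
    (hp : ∀ᶠ t in atTop, p ≤ (1 + t) * b t) :
    ∃ C > 0, ∀ t ≥ 0, (1 + t) ^ p ≤ C * lam b t := by
  obtain ⟨T, hT⟩ := eventually_atTop.1 hp
  have hT0 : 0 ≤ max T 0 := le_max_right _ _
  have hgrowth (t : ℝ) (ht : max T 0 ≤ t) :
      (1 + t) ^ p ≤ lam b t / lam b (max T 0) * (1 + max T 0) ^ p := by
    rw [lam, lam, ← Real.exp_sub]
    refine le_exp_sub_mul_of_deriv_le_mul
      (fun s hs => hasDerivWithinAt_one_add_rpow _ (hT0.trans hs))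
      (fun s hs => (hasDerivWithinAt_Ici_integral hb (hT0.trans hs)).mono
        (Set.Ici_subset_Ici.2 hT0)) (fun s hs => ?_) ht
    have hs0 : 0 < 1 + s := by linarith
    calc p * (1 + s) ^ (p - 1) ≤ (1 + s) * b s * (1 + s) ^ (p - 1) := by
          gcongr
          exact hT s ((le_max_left _ _).trans hs)
      _ = b s * (1 + s) ^ p := by rw [Real.rpow_sub_one hs0.ne']; field_simp
  have hcont : ContinuousOn (fun t => (1 + t) ^ p / lam b t) (Set.Ici 0) :=
    ContinuousOn.div (fun t ht => (hasDerivWithinAt_one_add_rpow _ ht).continuousWithinAt)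
      (continuousOn_lam hb) fun t _ => (lam_pos b t).ne'
  obtain ⟨C, hC, hle⟩ := exists_pos_forall_le_of_eventually_le hcont
    (B := (1 + max T 0) ^ p / lam b (max T 0)) <| by
      filter_upwards [eventually_ge_atTop (max T 0)] with t ht
      rw [div_le_iff₀ (lam_pos b t)]
      exact (hgrowth t ht).trans_eq (by ring)
  exact ⟨C, hC, fun t ht => (div_le_iff₀ (lam_pos b t)).1 (hle t ht)⟩

lemma exists_lam_le_mul_one_add_rpow {p : ℝ} (hb : ContinuousOn b (Set.Ici 0))
    (hp : ∀ᶠ t in atTop, (1 + t) * b t ≤ p) :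
    ∃ C > 0, ∀ t ≥ 0, lam b t ≤ C * (1 + t) ^ p := by
  obtain ⟨C, hC, hle⟩ := exists_one_add_rpow_le_mul_lam (p := -p) hb.neg <| by
    filter_upwards [hp] with t ht
    simpa using ht
  refine ⟨C, hC, fun t ht => ?_⟩
  have hinv := hle t ht
  have ht1 : 0 < (1 + t) ^ p := by positivity
  rwa [Real.rpow_neg (by positivity), lam_neg, ← div_eq_mul_inv,
    le_div_iff₀ (lam_pos b t), inv_mul_le_iff₀ ht1, mul_comm] at hinv

lemma integrableOn_inv_lam_sq {p : ℝ} (hb : ContinuousOn b (Set.Ici 0)) (hp : 1 / 2 < p)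
    (hbp : ∀ᶠ t in atTop, p ≤ (1 + t) * b t) :
    IntegrableOn (fun t => (lam b t ^ 2)⁻¹) (Set.Ioi 0) := by
  obtain ⟨C, -, hle⟩ := exists_one_add_rpow_le_mul_lam hb hbp
  have hbound : ∀ t ∈ Set.Ioi (0 : ℝ), (lam b t ^ 2)⁻¹ ≤ C ^ 2 * (t + 1) ^ (-(2 * p)) := by
    intro t (ht : 0 < t)
    have hsq : (t + 1) ^ (2 * p) ≤ lam b t ^ 2 * C ^ 2 := by
      rw [← mul_pow, mul_comm 2 p, ← Nat.cast_two, Real.rpow_mul_natCast (by positivity),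
        add_comm, mul_comm (lam b t)]
      gcongr
      exact hle t ht.le
    rwa [Real.rpow_neg (by positivity), ← div_eq_mul_inv, le_div_iff₀ (by positivity),
      inv_mul_le_iff₀ (pow_pos (lam_pos b t) 2)]
  have hmeas : AEStronglyMeasurable (fun t => (lam b t ^ 2)⁻¹) (volume.restrict (Set.Ioi 0)) :=
    ((continuousOn_inv_lam_sq hb).mono Set.Ioi_subset_Ici_self).aestronglyMeasurable
      measurableSet_Ioi
  have hdom : IntegrableOn (fun t : ℝ => C ^ 2 * (t + 1) ^ (-(2 * p))) (Set.Ioi 0) :=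
    (integrableOn_add_rpow_Ioi_of_lt (by linarith) (by norm_num)).const_mul _
  refine hdom.mono' hmeas <| (ae_restrict_mem measurableSet_Ioi).mono fun t ht => ?_
  rw [Real.norm_of_nonneg (by positivity)]
  exact hbound t ht

lemma integral_inv_lam_sq_le (hint : IntegrableOn (fun t => (lam b t ^ 2)⁻¹) (Set.Ioi 0))
    {t : ℝ} (ht : 0 ≤ t) :
    ∫ s in (0 : ℝ)..t, (lam b s ^ 2)⁻¹ ≤ ∫ s in Set.Ioi 0, (lam b s ^ 2)⁻¹ := by
  rw [intervalIntegral.integral_of_le ht]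
  exact setIntegral_mono_set hint (ae_of_all _ fun s => by positivity)
    Set.Ioc_subset_Ioi_self.eventuallyLE

end Lam

section EnergyNorm

variable {H : Type*} [NormedAddCommGroup H]

/-- The square root of the energy `Λ²|x|² + |y|²` of the state `(u, u') = (x, y)` at frequency
`Λ`. -/
noncomputable def energyNorm (Λ : ℝ) (x y : H) : ℝ := √(Λ ^ 2 * ‖x‖ ^ 2 + ‖y‖ ^ 2)

lemma energyNorm_nonneg (Λ : ℝ) (x y : H) : 0 ≤ energyNorm Λ x y := Real.sqrt_nonneg _

lemma energyNorm_sq (Λ : ℝ) (x y : H) : energyNorm Λ x y ^ 2 = Λ ^ 2 * ‖x‖ ^ 2 + ‖y‖ ^ 2 :=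
  Real.sq_sqrt (by positivity)

lemma energyNorm_le_add {Λ : ℝ} (hΛ : 0 ≤ Λ) (x y : H) : energyNorm Λ x y ≤ Λ * ‖x‖ + ‖y‖ := by
  refine Real.sqrt_le_iff.2 ⟨by positivity, ?_⟩
  have hcross : 0 ≤ Λ * ‖x‖ * ‖y‖ := by positivity
  linarith [add_sq (Λ * ‖x‖) ‖y‖, mul_pow Λ ‖x‖ 2]

lemma energyNorm_smul [NormedSpace ℝ H] {c : ℝ} (hc : 0 ≤ c) (Λ : ℝ) (x y : H) :
    energyNorm Λ (c • x) (c • y) = c * energyNorm Λ x y := by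
  rw [energyNorm, norm_smul, norm_smul, Real.norm_of_nonneg hc,
    show Λ ^ 2 * (c * ‖x‖) ^ 2 + (c * ‖y‖) ^ 2 = c ^ 2 * (Λ ^ 2 * ‖x‖ ^ 2 + ‖y‖ ^ 2) by ring,
    Real.sqrt_mul (sq_nonneg c), Real.sqrt_sq hc, energyNorm]

lemma energyNorm_add_smul_le [NormedSpace ℝ H] {Λ β κ : ℝ} (hβ : |β| ≤ κ * Λ) (hκ : 0 ≤ κ)
    (x y : H) : energyNorm Λ x (y + β • x) ≤ (1 + κ) * energyNorm Λ x y := by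
  have hnorm : ‖y + β • x‖ ≤ ‖y‖ + κ * Λ * ‖x‖ := by
    refine (norm_add_le _ _).trans ?_
    rw [norm_smul, Real.norm_eq_abs]
    gcongr
  refine Real.sqrt_le_iff.2 ⟨mul_nonneg (by linarith) (energyNorm_nonneg _ _ _), ?_⟩
  rw [mul_pow, energyNorm_sq]
  calc Λ ^ 2 * ‖x‖ ^ 2 + ‖y + β • x‖ ^ 2
      ≤ Λ ^ 2 * ‖x‖ ^ 2 + (‖y‖ + κ * Λ * ‖x‖) ^ 2 := by gcongr
    _ ≤ (1 + κ) ^ 2 * (Λ ^ 2 * ‖x‖ ^ 2 + ‖y‖ ^ 2) := by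
      have hYoung : 0 ≤ κ * (Λ * ‖x‖ - ‖y‖) ^ 2 := by positivity
      have hx_term : 0 ≤ κ * (Λ ^ 2 * ‖x‖ ^ 2) := by positivity
      have hy_term : 0 ≤ κ * ‖y‖ ^ 2 + κ ^ 2 * ‖y‖ ^ 2 := by positivity
      linarith

/-- The norm of the modified energy space `E^{(γ)}` at frequency `Λ`, applied to the Cauchy data
`(u(0), u'(0)) = (x, y)`: low frequencies `Λ < N` are weighted by `Λ^{-γ}`. -/
noncomputable def modifiedEnergyNorm (γ N Λ : ℝ) (x y : H) : ℝ :=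
  (min Λ N) ^ (-(γ + 1)) * Λ * ‖x‖ + (min Λ N) ^ (-γ) * ‖y‖

lemma modifiedEnergyNorm_nonneg {γ N Λ : ℝ} (hN : 0 ≤ N) (hΛ : 0 ≤ Λ) (x y : H) :
    0 ≤ modifiedEnergyNorm γ N Λ x y := by
  rw [modifiedEnergyNorm]
  positivity

lemma rpow_neg_mul_le_modifiedEnergyNorm {γ N Λ : ℝ} (hγ : 0 ≤ γ) (hN : 0 < N) (hΛ : 0 < Λ)
    (x y : H) : Λ ^ (-γ) * (‖x‖ + ‖y‖) ≤ modifiedEnergyNorm γ N Λ x y := by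
  have hmin : 0 < min Λ N := lt_min hΛ hN
  have hsplit : Λ ^ (-γ) = Λ ^ (-(γ + 1)) * Λ := by
    rw [← Real.rpow_add_one hΛ.ne']
    congr 1
    ring
  rw [mul_add]
  nth_rw 1 [hsplit]
  refine add_le_add ?_ ?_ <;> gcongr ?_ * _
  · gcongr ?_ * _
    exact Real.rpow_le_rpow_of_nonpos hmin (min_le_left _ _) (by linarith)
  · exact Real.rpow_le_rpow_of_nonpos hmin (min_le_left _ _) (by linarith)

lemma add_le_mul_modifiedEnergyNorm {γ N Λ : ℝ} (hγ : 0 ≤ γ) (hN : 0 < N) (hΛ : 0 < Λ)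
    (x y : H) :
    Λ * ‖x‖ + ‖y‖ ≤ (N ^ (γ + 1) + N ^ γ) * modifiedEnergyNorm γ N Λ x y := by
  have hmin : 0 < min Λ N := lt_min hΛ hN
  have hweight (q : ℝ) (hq : 0 ≤ q) : 1 ≤ N ^ q * min Λ N ^ (-q) := by
    rw [Real.rpow_neg hmin.le, ← div_eq_mul_inv, one_le_div (by positivity)]
    exact Real.rpow_le_rpow hmin.le (min_le_right _ _) hq
  calc Λ * ‖x‖ + ‖y‖
      ≤ N ^ (γ + 1) * min Λ N ^ (-(γ + 1)) * (Λ * ‖x‖) + N ^ γ * min Λ N ^ (-γ) * ‖y‖ :=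
        add_le_add (le_mul_of_one_le_left (by positivity) (hweight _ (by linarith)))
          (le_mul_of_one_le_left (by positivity) (hweight _ hγ))
    _ ≤ (N ^ (γ + 1) + N ^ γ) * modifiedEnergyNorm γ N Λ x y := by
      have hx_cross : 0 ≤ N ^ γ * (min Λ N ^ (-(γ + 1)) * Λ * ‖x‖) := by positivity
      have hy_cross : 0 ≤ N ^ (γ + 1) * (min Λ N ^ (-γ) * ‖y‖) := by positivity
      rw [modifiedEnergyNorm]
      linarith

end EnergyNorm

section Oscillator

variable {H : Type*} [NormedAddCommGroup H] [InnerProductSpace ℝ H] {w v : ℝ → H} {Λ : ℝ}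

lemma hasDerivWithinAt_energyNorm_sq {q t : ℝ} {s : Set ℝ}
    (hw : HasDerivWithinAt w (v t) s t) (hv : HasDerivWithinAt v ((q - Λ ^ 2) • w t) s t) :
    HasDerivWithinAt (fun x => energyNorm Λ (w x) (v x) ^ 2) (2 * q * inner ℝ (w t) (v t)) s t := by
  simp only [energyNorm_sq]
  refine ((hw.norm_sq.const_mul (Λ ^ 2)).add hv.norm_sq).congr_deriv ?_
  rw [real_inner_smul_right, real_inner_comm]
  ring

lemma two_mul_mul_inner_le_energyNorm_sq (hΛ : 0 < Λ) (q : ℝ) (x y : H) :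
    2 * q * inner ℝ x y ≤ |q| / Λ * energyNorm Λ x y ^ 2 := by
  have hYoung : 2 * (‖x‖ * ‖y‖) ≤ energyNorm Λ x y ^ 2 / Λ := by
    rw [le_div_iff₀ hΛ, energyNorm_sq]
    linarith [sq_nonneg (Λ * ‖x‖ - ‖y‖)]
  calc 2 * q * inner ℝ x y ≤ |2 * q * inner ℝ x y| := le_abs_self _
    _ = |q| * (2 * |inner ℝ x y|) := by rw [abs_mul, abs_mul, abs_two]; ring
    _ ≤ |q| * (2 * (‖x‖ * ‖y‖)) := by gcongr; exact abs_real_inner_le_norm x y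
    _ ≤ |q| * (energyNorm Λ x y ^ 2 / Λ) := by gcongr
    _ = |q| / Λ * energyNorm Λ x y ^ 2 := by ring

lemma energyNorm_le_exp_mul {q k K : ℝ → ℝ} {a : ℝ} (hΛ : 0 < Λ)
    (hw : ∀ t ≥ a, HasDerivWithinAt w (v t) (Set.Ici a) t)
    (hv : ∀ t ≥ a, HasDerivWithinAt v ((q t - Λ ^ 2) • w t) (Set.Ici a) t)
    (hK : ∀ t ≥ a, HasDerivWithinAt K (k t) (Set.Ici a) t)
    (hqk : ∀ t ≥ a, |q t| ≤ k t) {t : ℝ} (ht : a ≤ t) :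
    energyNorm Λ (w t) (v t) ≤
      Real.exp ((K t - K a) / (2 * Λ)) * energyNorm Λ (w a) (v a) := by
  have hsq := le_exp_sub_mul_of_deriv_le_mul
    (fun s hs => hasDerivWithinAt_energyNorm_sq (hw s hs) (hv s hs))
    (fun s hs => (hK s hs).div_const Λ)
    (fun s hs => (two_mul_mul_inner_le_energyNorm_sq hΛ (q s) (w s) (v s)).trans
      (by gcongr; exact hqk s hs)) ht
  refine le_of_sq_le_sq ?_ (mul_nonneg (Real.exp_pos _).le (energyNorm_nonneg _ _ _))
  have hexp : Real.exp ((K t - K a) / (2 * Λ)) ^ 2 = Real.exp (K t / Λ - K a / Λ) := by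
    rw [← Real.exp_nat_mul]
    congr 1
    push_cast
    field_simp
  rwa [mul_pow, hexp]

end Oscillator

lemma abs_sq_add_le_div_sq {x y C D r : ℝ} (hx : |x| ≤ C / r) (hy : |y| ≤ D / r ^ 2) :
    |x ^ 2 + y| ≤ (C ^ 2 + D) / r ^ 2 := by
  have hsq : |x ^ 2| ≤ C ^ 2 / r ^ 2 := by
    rw [abs_pow, ← div_pow]
    exact pow_le_pow_left₀ (abs_nonneg x) hx 2
  rw [add_div]
  exact (abs_add_le _ _).trans (add_le_add hsq hy)

/-- `u` solves `u'' + 2 b u' + Λ² u = 0` on `[0, ∞)` and `u'` is its derivative. The equation is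
encoded as the value of the derivative of `u'`; derivatives at `0` are one-sided. -/
structure IsDissipativeSolution {H : Type*} [NormedAddCommGroup H] [NormedSpace ℝ H]
    (b : ℝ → ℝ) (Λ : ℝ) (u u' : ℝ → H) : Prop where
  hasDerivWithinAt : ∀ t ≥ 0, HasDerivWithinAt u (u' t) (Set.Ici 0) t
  hasDerivWithinAt_deriv : ∀ t ≥ 0,
    HasDerivWithinAt u' (-(2 * b t) • u' t - Λ ^ 2 • u t) (Set.Ici 0) t

namespace IsDissipativeSolution

lemma of_hasDerivAt {b : ℝ → ℝ} {Λ : ℝ} {u u' u'' : ℝ → ℂ}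
    (hu : ∀ t ≥ 0, HasDerivAt u (u' t) t) (hu' : ∀ t ≥ 0, HasDerivAt u' (u'' t) t)
    (hode : ∀ t ≥ 0, u'' t + 2 * (b t : ℂ) * u' t + (Λ : ℂ) ^ 2 * u t = 0) :
    IsDissipativeSolution b Λ u u' where
  hasDerivWithinAt t ht := (hu t ht).hasDerivWithinAt
  hasDerivWithinAt_deriv t ht := (hu' t ht).hasDerivWithinAt.congr_deriv <| by
    simp only [Complex.real_smul]
    push_cast
    linear_combination hode t ht

section HyperbolicZone

variable {H : Type*} [NormedAddCommGroup H] {b b' : ℝ → ℝ} {C₁ C₂ Λ : ℝ} {u u' : ℝ → H}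

lemma hasDerivWithinAt_lam_smul [NormedSpace ℝ H] (hu : IsDissipativeSolution b Λ u u')
    (hb : ContinuousOn b (Set.Ici 0)) {t : ℝ} (ht : 0 ≤ t) :
    HasDerivWithinAt (fun x => lam b x • u x) (lam b t • (u' t + b t • u t)) (Set.Ici 0) t :=
  ((hasDerivWithinAt_lam hb ht).smul (hu.hasDerivWithinAt t ht)).congr_deriv (by module)

lemma hasDerivWithinAt_lam_smul_deriv [NormedSpace ℝ H] (hu : IsDissipativeSolution b Λ u u')
    (hb : ∀ t ≥ 0, HasDerivWithinAt b (b' t) (Set.Ici 0) t) {t : ℝ} (ht : 0 ≤ t) :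
    HasDerivWithinAt (fun x => lam b x • (u' x + b x • u x))
      ((b t ^ 2 + b' t - Λ ^ 2) • lam b t • u t) (Set.Ici 0) t := by
  have hlam := hasDerivWithinAt_lam (fun x hx => (hb x hx).continuousWithinAt) ht
  refine (hlam.smul ((hu.hasDerivWithinAt_deriv t ht).add
    ((hb t ht).smul (hu.hasDerivWithinAt t ht)))).congr_deriv ?_
  simp only [Pi.add_apply, Pi.smul_apply']
  module

variable [InnerProductSpace ℝ H]

lemma lam_mul_energyNorm_add_smul_le {M : ℝ} (hu : IsDissipativeSolution b Λ u u')
    (hb : ∀ t ≥ 0, HasDerivWithinAt b (b' t) (Set.Ici 0) t)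
    (hM : ∀ t ≥ 0, |b t ^ 2 + b' t| ≤ M / (1 + t) ^ 2) (hΛ : 0 < Λ) {s t : ℝ} (hs : 0 ≤ s)
    (hst : s ≤ t) (hΛs : 1 ≤ Λ * (1 + s)) :
    lam b t * energyNorm Λ (u t) (u' t + b t • u t) ≤
      Real.exp (M / 2) * (lam b s * energyNorm Λ (u s) (u' s + b s • u s)) := by
  have hbcont : ContinuousOn b (Set.Ici 0) := fun x hx => (hb x hx).continuousWithinAt
  have hsub : Set.Ici s ⊆ Set.Ici 0 := Set.Ici_subset_Ici.2 hs
  have hM0 : 0 ≤ M := by simpa using (abs_nonneg _).trans (hM 0 le_rfl)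
  have hprim : ∀ x ≥ s,
      HasDerivWithinAt (fun x => -(M / (1 + x))) (M / (1 + x) ^ 2) (Set.Ici s) x := by
    intro x hx
    have hx1 : 1 + x ≠ 0 := by linarith
    refine (((hasDerivAt_const x M).div ((hasDerivAt_id x).const_add 1)
      hx1).neg.hasDerivWithinAt).congr_deriv ?_
    simp only [id]
    ring
  have hgrowth := energyNorm_le_exp_mul hΛ
    (fun x hx => (hu.hasDerivWithinAt_lam_smul hbcont (hsub hx)).mono hsub)
    (fun x hx => (hu.hasDerivWithinAt_lam_smul_deriv hb (hsub hx)).mono hsub) hprim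
    (fun x hx => hM x (hsub hx)) hst
  simp only [energyNorm_smul (lam_pos b _).le] at hgrowth
  have hexponent : (-(M / (1 + t)) - -(M / (1 + s))) / (2 * Λ) ≤ M / 2 := by
    have htail : 0 ≤ M / (1 + t) := div_nonneg hM0 (by linarith)
    have hhead : M / (1 + s) ≤ M * Λ := by
      rw [div_le_iff₀ (by positivity), mul_assoc]
      exact le_mul_of_one_le_right hM0 hΛs
    rw [div_le_iff₀ (by positivity)]
    linarith
  exact hgrowth.trans <| mul_le_mul_of_nonneg_right (Real.exp_le_exp.2 hexponent) <|
    mul_nonneg (lam_pos b s).le (energyNorm_nonneg _ _ _)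

lemma lam_mul_energyNorm_le_of_one_le_mul (hu : IsDissipativeSolution b Λ u u')
    (hb : ∀ t ≥ 0, HasDerivWithinAt b (b' t) (Set.Ici 0) t)
    (hb₁ : ∀ t ≥ 0, |b t| ≤ C₁ / (1 + t)) (hb₂ : ∀ t ≥ 0, |b' t| ≤ C₂ / (1 + t) ^ 2)
    (hΛ : 0 < Λ) {s t : ℝ} (hs : 0 ≤ s) (hst : s ≤ t) (hΛs : 1 ≤ Λ * (1 + s)) :
    lam b t * energyNorm Λ (u t) (u' t) ≤
      (1 + C₁) ^ 2 * Real.exp ((C₁ ^ 2 + C₂) / 2) *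
        (lam b s * energyNorm Λ (u s) (u' s)) := by
  have hC₁ : 0 ≤ C₁ := by simpa using (abs_nonneg _).trans (hb₁ 0 le_rfl)
  have hzone (r : ℝ) (hr : s ≤ r) : |b r| ≤ C₁ * Λ := by
    have hΛr : 1 ≤ Λ * (1 + r) := hΛs.trans (by gcongr)
    refine (hb₁ r (hs.trans hr)).trans ?_
    rw [div_le_iff₀ (by linarith), mul_assoc]
    exact le_mul_of_one_le_right hC₁ hΛr
  have hunshift : energyNorm Λ (u t) (u' t) ≤
      (1 + C₁) * energyNorm Λ (u t) (u' t + b t • u t) := by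
    simpa using energyNorm_add_smul_le (β := -b t) (by simpa using hzone t hst) hC₁ (u t)
      (u' t + b t • u t)
  have hshift := energyNorm_add_smul_le (hzone s le_rfl) hC₁ (u s) (u' s)
  have hlam_s := (lam_pos b s).le
  have hlam_t := (lam_pos b t).le
  calc lam b t * energyNorm Λ (u t) (u' t)
      ≤ (1 + C₁) * (lam b t * energyNorm Λ (u t) (u' t + b t • u t)) := by
        rw [mul_left_comm]
        gcongr
    _ ≤ (1 + C₁) * (Real.exp ((C₁ ^ 2 + C₂) / 2) *
          (lam b s * energyNorm Λ (u s) (u' s + b s • u s))) := by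
        gcongr (1 + C₁) * ?_
        exact hu.lam_mul_energyNorm_add_smul_le hb
          (fun x hx => abs_sq_add_le_div_sq (hb₁ x hx) (hb₂ x hx)) hΛ hs hst hΛs
    _ ≤ (1 + C₁) * (Real.exp ((C₁ ^ 2 + C₂) / 2) *
          (lam b s * ((1 + C₁) * energyNorm Λ (u s) (u' s)))) := by gcongr
    _ = _ := by ring

end HyperbolicZone

section DissipativeZone

variable {H : Type*} [NormedAddCommGroup H] [NormedSpace ℝ H] {b : ℝ → ℝ} {Λ B t : ℝ}
  {u u' : ℝ → H}

lemma hasDerivWithinAt_lam_sq_smul_deriv (hu : IsDissipativeSolution b Λ u u')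
    (hb : ContinuousOn b (Set.Ici 0)) (ht : 0 ≤ t) :
    HasDerivWithinAt (fun x => lam b x ^ 2 • u' x) (-(lam b t ^ 2 * Λ ^ 2) • u t)
      (Set.Ici 0) t := by
  refine (((hasDerivWithinAt_lam hb ht).pow 2).smul
    (hu.hasDerivWithinAt_deriv t ht)).congr_deriv ?_
  simp only [Pi.pow_apply]
  module

lemma norm_deriv_le (hu : IsDissipativeSolution b Λ u u') (hb : ContinuousOn b (Set.Ici 0))
    (hb0 : ∀ t ≥ 0, 0 ≤ b t) (ht : 0 ≤ t) (hB : ∀ s ∈ Set.Icc 0 t, ‖u s‖ ≤ B) :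
    ‖u' t‖ ≤ ‖u' 0‖ * (lam b t ^ 2)⁻¹ + Λ ^ 2 * B * t := by
  have hlam : 0 < lam b t := lam_pos b t
  have hbound : ∀ x ∈ Set.Icc 0 t,
      ‖-(lam b x ^ 2 * Λ ^ 2) • u x‖ ≤ lam b t ^ 2 * Λ ^ 2 * B := by
    intro x hx
    rw [norm_smul, norm_neg, Real.norm_of_nonneg (by positivity)]
    have hmono : lam b x ≤ lam b t := monotoneOn_lam hb hb0 hx.1 ht hx.2
    have hpos : 0 ≤ lam b x := (lam_pos b x).le
    have hux : ‖u x‖ ≤ B := hB x hx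
    gcongr
  have hmvt := (convex_Icc 0 t).norm_image_sub_le_of_norm_hasDerivWithin_le
    (fun x hx => (hu.hasDerivWithinAt_lam_sq_smul_deriv hb hx.1).mono Set.Icc_subset_Ici_self)
    hbound (Set.left_mem_Icc.2 ht) (Set.right_mem_Icc.2 ht)
  have htri := norm_sub_norm_le (lam b t ^ 2 • u' t) (lam b 0 ^ 2 • u' 0)
  simp only [lam_zero, one_pow, one_smul, norm_smul, sub_zero, Real.norm_of_nonneg ht,
    Real.norm_of_nonneg (sq_nonneg (lam b t))] at hmvt htri
  calc ‖u' t‖ = lam b t ^ 2 * ‖u' t‖ * (lam b t ^ 2)⁻¹ := by field_simp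
    _ ≤ (‖u' 0‖ + lam b t ^ 2 * Λ ^ 2 * B * t) * (lam b t ^ 2)⁻¹ := by gcongr; linarith
    _ = ‖u' 0‖ * (lam b t ^ 2)⁻¹ + Λ ^ 2 * B * t := by field_simp

lemma norm_le_add_integral (hu : IsDissipativeSolution b Λ u u')
    (hb : ContinuousOn b (Set.Ici 0)) (hb0 : ∀ t ≥ 0, 0 ≤ b t) (ht : 0 ≤ t)
    (hB : ∀ s ∈ Set.Icc 0 t, ‖u s‖ ≤ B) :
    ‖u t‖ ≤ ‖u 0‖ + ‖u' 0‖ * (∫ s in (0 : ℝ)..t, (lam b s ^ 2)⁻¹) + Λ ^ 2 * B * (t ^ 2 / 2) := by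
  have hmajorant : ∀ x ≥ 0, HasDerivWithinAt
      (fun x => ‖u 0‖ + ‖u' 0‖ * (∫ s in (0 : ℝ)..x, (lam b s ^ 2)⁻¹) + Λ ^ 2 * B * (x ^ 2 / 2))
      (‖u' 0‖ * (lam b x ^ 2)⁻¹ + Λ ^ 2 * B * x) (Set.Ici 0) x := fun x hx =>
    ((((hasDerivWithinAt_Ici_integral (continuousOn_inv_lam_sq hb) hx).const_mul _).const_add
      _).add (((hasDerivAt_pow 2 x).hasDerivWithinAt.div_const 2).const_mul _)).congr_deriv
      (by push_cast; ring)
  exact image_norm_le_of_norm_deriv_right_le_deriv_boundary'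
    (fun x hx => (hu.hasDerivWithinAt x hx.1).continuousWithinAt.mono Set.Icc_subset_Ici_self)
    (fun x hx => (hu.hasDerivWithinAt x hx.1).mono (Set.Ici_subset_Ici.2 hx.1)) (by simp)
    (fun x hx => (hmajorant x hx.1).continuousWithinAt.mono Set.Icc_subset_Ici_self)
    (fun x hx => (hmajorant x hx.1).mono (Set.Ici_subset_Ici.2 hx.1))
    (fun x hx => hu.norm_deriv_le hb hb0 hx.1 fun s hs => hB s ⟨hs.1, hs.2.trans hx.2.le⟩)
    (Set.right_mem_Icc.2 ht)

lemma norm_le_two_mul (hu : IsDissipativeSolution b Λ u u') (hb : ContinuousOn b (Set.Ici 0))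
    (hb0 : ∀ t ≥ 0, 0 ≤ b t) (hint : IntegrableOn (fun s => (lam b s ^ 2)⁻¹) (Set.Ioi 0))
    (hΛ : 0 ≤ Λ) (hΛt : Λ * t ≤ 1) :
    ∀ s ∈ Set.Icc 0 t, ‖u s‖ ≤ 2 * (‖u 0‖ + ‖u' 0‖ * ∫ s in Set.Ioi 0, (lam b s ^ 2)⁻¹) := by
  intro s hs
  obtain ⟨r, hr, hmax⟩ := isCompact_Icc.exists_isMaxOn ⟨s, hs⟩ (f := fun s => ‖u s‖)
    fun x hx => ((hu.hasDerivWithinAt x hx.1).continuousWithinAt.mono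
      Set.Icc_subset_Ici_self).norm
  have hr0 : 0 ≤ r := hr.1
  have hΛr : (Λ * r) ^ 2 ≤ 1 :=
    pow_le_one₀ (by positivity) ((mul_le_mul_of_nonneg_left hr.2 hΛ).trans hΛt)
  have habsorb : Λ ^ 2 * ‖u r‖ * (r ^ 2 / 2) ≤ ‖u r‖ / 2 := by
    linarith [mul_le_mul_of_nonneg_right hΛr (norm_nonneg (u r))]
  have hint_le := mul_le_mul_of_nonneg_left (integral_inv_lam_sq_le hint hr0) (norm_nonneg (u' 0))
  have hbound := hu.norm_le_add_integral hb hb0 hr0 fun x hx => hmax ⟨hx.1, hx.2.trans hr.2⟩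
  linarith [show ‖u s‖ ≤ ‖u r‖ from hmax hs]

lemma lam_mul_energyNorm_le (hu : IsDissipativeSolution b Λ u u')
    (hb : ContinuousOn b (Set.Ici 0)) (hb0 : ∀ t ≥ 0, 0 ≤ b t)
    (hint : IntegrableOn (fun s => (lam b s ^ 2)⁻¹) (Set.Ioi 0))
    (hΛ : 0 ≤ Λ) (ht : 0 ≤ t) (hΛt : Λ * t ≤ 1) :
    lam b t * energyNorm Λ (u t) (u' t) ≤
      ‖u' 0‖ + 4 * (lam b t * Λ) *
        (‖u 0‖ + ‖u' 0‖ * ∫ s in Set.Ioi 0, (lam b s ^ 2)⁻¹) := by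
  set B := 2 * (‖u 0‖ + ‖u' 0‖ * ∫ s in Set.Ioi 0, (lam b s ^ 2)⁻¹) with hBdef
  have hlam : 0 < lam b t := lam_pos b t
  have hlam1 : 1 ≤ lam b t := by
    simpa only [lam_zero] using monotoneOn_lam hb hb0 Set.self_mem_Ici ht ht
  have hB : ∀ s ∈ Set.Icc 0 t, ‖u s‖ ≤ B := hu.norm_le_two_mul hb hb0 hint hΛ hΛt
  have hut : ‖u t‖ ≤ B := hB t (Set.right_mem_Icc.2 ht)
  have hu't : lam b t * ‖u' t‖ ≤ ‖u' 0‖ + lam b t * Λ * B := by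
    calc lam b t * ‖u' t‖ ≤ lam b t * (‖u' 0‖ * (lam b t ^ 2)⁻¹ + Λ ^ 2 * B * t) := by
          gcongr
          exact hu.norm_deriv_le hb hb0 ht hB
      _ = ‖u' 0‖ * (lam b t)⁻¹ + lam b t * Λ * B * (Λ * t) := by field_simp
      _ ≤ ‖u' 0‖ * 1 + lam b t * Λ * B * 1 := by
          gcongr
          exact inv_le_one_of_one_le₀ hlam1
      _ = ‖u' 0‖ + lam b t * Λ * B := by ring
  calc lam b t * energyNorm Λ (u t) (u' t) ≤ lam b t * (Λ * ‖u t‖ + ‖u' t‖) := by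
        gcongr
        exact energyNorm_le_add hΛ _ _
    _ = lam b t * Λ * ‖u t‖ + lam b t * ‖u' t‖ := by ring
    _ ≤ lam b t * Λ * B + (‖u' 0‖ + lam b t * Λ * B) := by gcongr
    _ = _ := by rw [hBdef]; ring

variable (H) in
lemma exists_lam_mul_energyNorm_le_rpow_mul {γ : ℝ} (hb : ContinuousOn b (Set.Ici 0))
    (hb0 : ∀ t ≥ 0, 0 ≤ b t) (hint : IntegrableOn (fun s => (lam b s ^ 2)⁻¹) (Set.Ioi 0))
    (hγ0 : 0 ≤ γ) (hγ : ∀ᶠ t in atTop, (1 + t) * b t ≤ γ + 1) :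
    ∃ Q > 0, ∀ Λ > 0, ∀ u u' : ℝ → H, IsDissipativeSolution b Λ u u' →
      ∀ t ≥ 0, Λ * (1 + t) ≤ 1 →
        lam b t * energyNorm Λ (u t) (u' t) ≤ Q * (Λ ^ (-γ) * (‖u 0‖ + ‖u' 0‖)) := by
  obtain ⟨D, hD, hlamD⟩ := exists_lam_le_mul_one_add_rpow hb hγ
  set I := ∫ s in Set.Ioi 0, (lam b s ^ 2)⁻¹
  have hI : 0 ≤ I := integral_nonneg fun s => by positivity
  refine ⟨1 + 4 * D * (1 + I), by positivity, fun Λ hΛ u u' hu t ht hΛt => ?_⟩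
  have hΛγ : 1 ≤ Λ ^ (-γ) :=
    Real.one_le_rpow_of_pos_of_le_one_of_nonpos hΛ (by nlinarith) (by linarith)
  have hlamΛ : lam b t * Λ ≤ D * Λ ^ (-γ) := by
    have hinv : (1 + t) ^ (γ + 1) ≤ Λ ^ (-γ) * Λ⁻¹ := by
      rw [← div_eq_mul_inv, ← Real.rpow_sub_one hΛ.ne', ← neg_add', Real.rpow_neg hΛ.le,
        ← Real.inv_rpow hΛ.le]
      gcongr
      rwa [← one_div, le_div_iff₀' hΛ]
    calc lam b t * Λ ≤ D * (Λ ^ (-γ) * Λ⁻¹) * Λ := by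
          gcongr
          exact (hlamD t ht).trans (by gcongr)
      _ = D * Λ ^ (-γ) := by field_simp
  calc lam b t * energyNorm Λ (u t) (u' t)
      ≤ ‖u' 0‖ + 4 * (lam b t * Λ) * (‖u 0‖ + ‖u' 0‖ * I) :=
        hu.lam_mul_energyNorm_le hb hb0 hint hΛ.le ht (by linarith)
    _ ≤ Λ ^ (-γ) * (‖u 0‖ + ‖u' 0‖) +
          4 * (D * Λ ^ (-γ)) * ((1 + I) * (‖u 0‖ + ‖u' 0‖)) := by
        gcongr ?_ + 4 * ?_ * ?_
        · exact (le_add_of_nonneg_left (norm_nonneg _)).trans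
            (le_mul_of_one_le_left (by positivity) hΛγ)
        · nlinarith [norm_nonneg (u 0), norm_nonneg (u' 0)]
    _ = _ := by ring

variable (H) in
lemma exists_lam_mul_energyNorm_le_modifiedEnergyNorm {γ N : ℝ} (hb : ContinuousOn b (Set.Ici 0))
    (hb0 : ∀ t ≥ 0, 0 ≤ b t) (hint : IntegrableOn (fun s => (lam b s ^ 2)⁻¹) (Set.Ioi 0))
    (hN : 0 < N) (hγ0 : 0 ≤ γ) (hγ : ∀ᶠ t in atTop, (1 + t) * b t ≤ γ + 1) :
    ∃ Q > 0, ∀ Λ > 0, ∀ u u' : ℝ → H, IsDissipativeSolution b Λ u u' →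
      ∀ t ≥ 0, t = 0 ∨ Λ * (1 + t) ≤ 1 →
        lam b t * energyNorm Λ (u t) (u' t) ≤ Q * modifiedEnergyNorm γ N Λ (u 0) (u' 0) := by
  obtain ⟨Q, hQ, hdiss⟩ := exists_lam_mul_energyNorm_le_rpow_mul H hb hb0 hint hγ0 hγ
  refine ⟨N ^ (γ + 1) + N ^ γ + Q, by positivity, fun Λ hΛ u u' hu t ht hzone => ?_⟩
  have hR : 0 ≤ modifiedEnergyNorm γ N Λ (u 0) (u' 0) := modifiedEnergyNorm_nonneg hN.le hΛ.le _ _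
  rw [add_mul]
  rcases hzone with rfl | hΛt
  · rw [lam_zero, one_mul]
    exact ((energyNorm_le_add hΛ.le _ _).trans (add_le_mul_modifiedEnergyNorm hγ0 hN hΛ _ _)).trans
      (le_add_of_nonneg_right (by positivity))
  · refine (hdiss Λ hΛ u u' hu t ht hΛt).trans (le_add_of_nonneg_of_le (by positivity) ?_)
    gcongr
    exact rpow_neg_mul_le_modifiedEnergyNorm hγ0 hN hΛ _ _

end DissipativeZone

end IsDissipativeSolution

lemma eventually_le_one_add_mul {b : ℝ → ℝ} {μ : ℝ} (hb : ∀ t ≥ 0, 0 ≤ b t)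
    (hμ : ∀ᶠ t in atTop, μ ≤ t * b t) : ∀ᶠ t in atTop, μ ≤ (1 + t) * b t := by
  filter_upwards [hμ, eventually_ge_atTop 0] with t hμt ht
  linarith [hb t ht]

lemma eventually_one_add_mul_le {b : ℝ → ℝ} {μ p : ℝ} (hμp : μ < p)
    (hμ : ∀ᶠ t in atTop, t * b t ≤ μ) : ∀ᶠ t in atTop, (1 + t) * b t ≤ p := by
  have hlim : Tendsto (fun t : ℝ => (1 + t⁻¹) * μ) atTop (nhds μ) := by
    simpa using (tendsto_inv_atTop_zero.const_add (1 : ℝ)).mul_const μ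
  filter_upwards [hμ, hlim.eventually_le_const hμp, eventually_gt_atTop 0] with t hμt hpt ht
  calc (1 + t) * b t = (1 + t⁻¹) * (t * b t) := by field_simp; ring
    _ ≤ (1 + t⁻¹) * μ := by gcongr
    _ ≤ p := hpt

lemma exists_pos_forall_abs_le_div_one_add {b : ℝ → ℝ} {p : ℝ} (hb : ContinuousOn b (Set.Ici 0))
    (hb0 : ∀ t ≥ 0, 0 ≤ b t) (hp : ∀ᶠ t in atTop, (1 + t) * b t ≤ p) :
    ∃ C > 0, ∀ t ≥ 0, |b t| ≤ C / (1 + t) := by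
  obtain ⟨C, hC, hle⟩ := exists_pos_forall_le_of_eventually_le
    ((continuousOn_const.add continuousOn_id).mul hb) hp
  refine ⟨C, hC, fun t ht => ?_⟩
  rw [abs_of_nonneg (hb0 t ht), le_div_iff₀' (by positivity)]
  exact hle t ht

lemma exists_mem_Icc_mul_one_add_le_one_and_one_le {Λ t : ℝ} (hΛ : 0 < Λ) (ht : 0 ≤ t) :
    ∃ s ∈ Set.Icc 0 t, (s = 0 ∨ Λ * (1 + s) ≤ 1) ∧ (s = t ∨ 1 ≤ Λ * (1 + s)) := by
  rcases le_total 1 Λ with hΛ1 | hΛ1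
  · exact ⟨0, ⟨le_rfl, ht⟩, Or.inl rfl, Or.inr (by simpa using hΛ1)⟩
  rcases le_total (Λ * (1 + t)) 1 with hΛt | hΛt
  · exact ⟨t, ⟨ht, le_rfl⟩, Or.inr hΛt, Or.inl rfl⟩
  · have hmeet : Λ * (1 + (Λ⁻¹ - 1)) = 1 := by field_simp; ring
    refine ⟨Λ⁻¹ - 1, ⟨?_, ?_⟩, Or.inr hmeet.le, Or.inr hmeet.ge⟩
    · exact sub_nonneg.2 ((one_le_inv₀ hΛ).2 hΛ1)
    · rw [sub_le_iff_le_add', inv_le_iff_one_le_mul₀' hΛ]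
      exact hΛt

theorem energy_estimate_modified_space_general {H : Type*} [NormedAddCommGroup H]
    [InnerProductSpace ℝ H] {b b' : ℝ → ℝ} {C₂ μ μ' N γ : ℝ}
    (hb' : ∀ t ≥ 0, HasDerivWithinAt b (b' t) (Set.Ici 0) t)
    (hb0 : ∀ t ≥ 0, 0 ≤ b t) (hb₂ : ∀ t ≥ 0, |b' t| ≤ C₂ / (1 + t) ^ 2)
    (hμ : 1 / 2 < μ) (hbμ : ∀ᶠ t in atTop, μ ≤ t * b t)
    (hN : 0 < N) (hγ0 : 0 ≤ γ) (hbμ' : ∀ᶠ t in atTop, t * b t ≤ μ') (hγ : μ' - 1 < γ) :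
    ∃ C > 0, ∀ Λ > 0, ∀ u u' : ℝ → H, IsDissipativeSolution b Λ u u' → ∀ t ≥ 0,
      energyNorm Λ (u t) (u' t) ≤ C / lam b t * modifiedEnergyNorm γ N Λ (u 0) (u' 0) := by
  have hb : ContinuousOn b (Set.Ici 0) := fun t ht => (hb' t ht).continuousWithinAt
  have hbγ : ∀ᶠ t in atTop, (1 + t) * b t ≤ γ + 1 :=
    eventually_one_add_mul_le (by linarith) hbμ'
  obtain ⟨C₁, hC₁, hb₁⟩ := exists_pos_forall_abs_le_div_one_add hb hb0 hbγ
  obtain ⟨Q, hQ, hdiss⟩ :=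
    IsDissipativeSolution.exists_lam_mul_energyNorm_le_modifiedEnergyNorm H hb hb0
      (integrableOn_inv_lam_sq hb hμ (eventually_le_one_add_mul hb0 hbμ)) hN hγ0 hbγ
  set K := (1 + C₁) ^ 2 * Real.exp ((C₁ ^ 2 + C₂) / 2)
  refine ⟨(1 + K) * Q, by positivity, fun Λ hΛ u u' hu t ht => ?_⟩
  obtain ⟨s, ⟨hs, hst⟩, hs_diss, hs_hyp⟩ := exists_mem_Icc_mul_one_add_le_one_and_one_le hΛ ht
  have hpropagate : lam b t * energyNorm Λ (u t) (u' t) ≤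
      (1 + K) * (lam b s * energyNorm Λ (u s) (u' s)) := by
    have hEs := mul_nonneg (lam_pos b s).le (energyNorm_nonneg Λ (u s) (u' s))
    rw [one_add_mul]
    rcases hs_hyp with rfl | hΛs
    · exact le_add_of_nonneg_right (by positivity)
    · exact le_add_of_nonneg_of_le hEs
        (hu.lam_mul_energyNorm_le_of_one_le_mul hb' hb₁ hb₂ hΛ hs hst hΛs)
  rw [div_mul_eq_mul_div, le_div_iff₀' (lam_pos b t), mul_assoc]
  exact hpropagate.trans (by gcongr (1 + K) * ?_; exact hdiss Λ hΛ u u' hu s hs hs_diss)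

/-- Energy estimate (Theorem `thm:EnEst` at fixed frequency)
in the case `liminf t·b(t) > 1/2` with `γ ≥ 0`, `γ > μ̄ − 1` where
`μ̄ = limsup t·b(t)` (expressed by an eventual upper bound `μ'` of `t·b(t)` with
`γ > μ' − 1`): every solution of `u'' + 2b(t)u' + Λ²u = 0` satisfies
`√(Λ²|u(t)|² + |u'(t)|²) ≤ (C/λ(t))·(min(Λ,N)^{−γ−1}Λ|u(0)| + min(Λ,N)^{−γ}|u'(0)|)`. -/
theorem energy_estimate_modified_space
    (b b' : ℝ → ℝ) (C₁ C₂ : ℝ)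
    (hb' : ∀ t ≥ (0:ℝ), HasDerivAt b (b' t) t)
    (hb'c : ContinuousOn b' (Set.Ici 0))
    (hb0 : ∀ t ≥ (0:ℝ), 0 ≤ b t)
    (hb1 : ∀ t ≥ (0:ℝ), b t ≤ C₁ / (1 + t))
    (hb2 : ∀ t ≥ (0:ℝ), |b' t| ≤ C₂ / (1 + t) ^ 2)
    (hliminf : ∃ μ > (1/2 : ℝ), ∀ᶠ t in atTop, μ ≤ t * b t)
    (N γ : ℝ) (hN : C₁ < N) (hγ0 : 0 ≤ γ)
    (hγ : ∃ μ' : ℝ, (∀ᶠ t in atTop, t * b t ≤ μ') ∧ μ' - 1 < γ) :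
    ∃ C > (0:ℝ), ∀ Λ > (0:ℝ), ∀ u u' u'' : ℝ → ℂ,
      (∀ t ≥ (0:ℝ), HasDerivAt u (u' t) t) →
      (∀ t ≥ (0:ℝ), HasDerivAt u' (u'' t) t) →
      ContinuousOn u'' (Set.Ici 0) →
      (∀ t ≥ (0:ℝ), u'' t + 2 * (b t : ℂ) * u' t + (Λ : ℂ) ^ 2 * u t = 0) →
      ∀ t ≥ (0:ℝ),
        Real.sqrt (Λ ^ 2 * ‖u t‖ ^ 2 + ‖u' t‖ ^ 2) ≤
          (C / lam b t) *
            ((min Λ N) ^ (-(γ + 1)) * Λ * ‖u 0‖ + (min Λ N) ^ (-γ) * ‖u' 0‖) := by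
  obtain ⟨μ, hμ, hbμ⟩ := hliminf
  obtain ⟨μ', hbμ', hμ'⟩ := hγ
  have hN0 : 0 < N := lt_of_le_of_lt (by simpa using (hb0 0 le_rfl).trans (hb1 0 le_rfl)) hN
  obtain ⟨C, hC, hest⟩ := energy_estimate_modified_space_general (H := ℂ)
    (fun t ht => (hb' t ht).hasDerivWithinAt) hb0 hb2 hμ hbμ hN0 hγ0 hbμ' hμ'
  exact ⟨C, hC, fun Λ hΛ u u' u'' hu hu' _ hode => hest Λ hΛ u u'
    (IsDissipativeSolution.of_hasDerivAt hu hu' hode)⟩
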